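/- For every finite Souslin measurable colouring c of the set 𝓔_∞ of all equivalence relations on ω with infinitely many equivalence classes, there exists X ∈ 𝓔_∞ such that c is constant on 𝓔_∞ ↾ X, the set of all members of 𝓔_∞ that are coarsenings of X. -/

import Mathlib

open Set

namespace DualRamsey

/-- `F` is a coarsening of `E` (written `F ≤ E` in the paper): every class of `F`
is a union of classes of `E`. -/
def Coarsens {X : Type*} (F E : Setoid X) : Prop := ∀ a b, E.r a b → F.r a b

/-- The set of equivalence classes of a setoid. -/
def classes {X : Type*} (E : Setoid X) : Set (Set X) := {C | ∃ x, C = {y | E.r x y}}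

/-- The set of minimal representatives of the classes of an equivalence relation on ℕ. -/
def minReps (E : Setoid ℕ) : Set ℕ := {n | ∀ m, E.r n m → n ≤ m}

/-- `pRep E k` is `p_k(E)`, the k-th minimal representative in increasing order. -/
noncomputable def pRep (E : Setoid ℕ) (k : ℕ) : ℕ := Nat.nth (· ∈ minReps E) k

/-- `approx n E` is the n-th approximation `r_n(E)`: `E` restricted to `{0,…,p_n(E)-1}`,
identified with its graph. -/
noncomputable def approx (n : ℕ) (E : Setoid ℕ) : Set (ℕ × ℕ) :=
  {q | q.1 < pRep E n ∧ q.2 < pRep E n ∧ E.r q.1 q.2}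

/-- Basic set `[a, E]` relative to a space `S` of equivalence relations. -/
noncomputable def basicSet (S : Set (Setoid ℕ)) (a : Set (ℕ × ℕ)) (E : ↥S) : Set ↥S :=
  {F | Coarsens F.1 E.1 ∧ ∃ n, approx n F.1 = a}

/-- The Ellentuck topology on a space `S` of equivalence relations. -/
noncomputable def ellentuckTop (S : Set (Setoid ℕ)) : TopologicalSpace ↥S :=
  TopologicalSpace.generateFrom {U | ∃ a E, U = basicSet S a E}

def IsRamsey (S : Set (Setoid ℕ)) (X : Set ↥S) : Prop :=
  ∀ (a : Set (ℕ × ℕ)) (B : ↥S), (basicSet S a B).Nonempty →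
    ∃ A ∈ basicSet S a B, basicSet S a A ⊆ X ∨ basicSet S a A ∩ X = ∅

def IsRamseyNull (S : Set (Setoid ℕ)) (X : Set ↥S) : Prop :=
  ∀ (a : Set (ℕ × ℕ)) (B : ↥S), (basicSet S a B).Nonempty →
    ∃ A ∈ basicSet S a B, basicSet S a A ∩ X = ∅

/-- The property of Baire with respect to the Ellentuck topology. -/
noncomputable def HasBP (S : Set (Setoid ℕ)) (X : Set ↥S) : Prop :=
  ∃ O M : Set ↥S, (ellentuckTop S).IsOpen O ∧ @IsMeagre _ (ellentuckTop S) M ∧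
    X = (O \ M) ∪ (M \ O)

/-- The Souslin operation applied to a scheme indexed by finite sequences of naturals. -/
def souslinOp {X : Type*} (A : List ℕ → Set X) : Set X :=
  ⋃ x : ℕ → ℕ, ⋂ n : ℕ, A ((List.range n).map x)

/-- `Y` belongs to the smallest field of sets containing all `t`-open sets and
closed under the Souslin operation. -/
def SouslinMeasurable {X : Type*} (t : TopologicalSpace X) (Y : Set X) : Prop :=
  ∀ 𝒜 : Set (Set X),
    (∀ U, t.IsOpen U → U ∈ 𝒜) →
    (∀ A ∈ 𝒜, Aᶜ ∈ 𝒜) →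
    (∀ A ∈ 𝒜, ∀ B ∈ 𝒜, A ∪ B ∈ 𝒜) →
    (∀ f : List ℕ → Set X, (∀ s, f s ∈ 𝒜) → souslinOp f ∈ 𝒜) →
    Y ∈ 𝒜

/-- The graph of an equivalence relation as a boolean-valued function. -/
noncomputable def graphMap {X : Type*} (E : Setoid X) : X × X → Bool :=
  fun q => @decide (E.r q.1 q.2) (Classical.dec _)

/-- The metrizable topology on a space of equivalence relations, as a subspace of
`2^(X × X)` via graphs. -/
noncomputable def graphTop {X : Type*} (S : Set (Setoid X)) : TopologicalSpace ↥S :=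
  TopologicalSpace.induced (fun E => graphMap E.1) inferInstance



/-- `𝓔_∞`: equivalence relations on ℕ with infinitely many classes. -/
def Einf : Set (Setoid ℕ) := {E | (classes E).Infinite}

/-!
An equivalence relation on `ℕ` with infinitely many classes is the kernel of a unique rigid
surjection of `ℕ`, and `F` is coarser than `E` exactly when the rigid surjection of `F` is a left
multiple of that of `E`. In the monoid of rigid surjections, fusion applies to every property that
passes to basic neighbourhoods and can be achieved by shrinking them. For colourings that depend
only on the values before the first occurrence of `j + 1`, the pigeonhole principle is the
Carlson–Simpson lemma on infinite parameter words, whose proof uses an ultrafilter on variable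
words sent by all substitutions into idempotents of one minimal left ideal. Fusion and the
pigeonhole principle turn Nash-Williams' combinatorial forcing into a proof that Ellentuck-open
sets are completely Ramsey. By fusion again, Ramsey null sets form a σ-ideal, so completely Ramsey
sets form a σ-algebra; as the closure of a set is its hull modulo null sets, Marczewski's theorem
makes this σ-algebra closed under the Souslin operation. Finitely many colour classes are then
decided one after the other.
-/

/-! ### Idempotent ultrafilters and infinite parameter words -/

section Ultrafilters

attribute [local instance] Ultrafilter.mul Ultrafilter.semigroup

/-- In other words, `M * w` is a minimal left ideal. -/
theorem exists_minimal_of_compact_t2_of_continuous_mul_left {M : Type*} [Semigroup M] [Nonempty M]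
    [TopologicalSpace M] [CompactSpace M] [T2Space M]
    (continuous_mul_left : ∀ r : M, Continuous (· * r)) :
    ∃ w : M, ∀ p, ∃ r, r * (p * w) = w := by
  obtain ⟨w, hw⟩ := exists_maximal_of_chains_bounded (r := fun a b : M => ∃ p, p * a = b)
    (fun c hc => by
      rcases c.eq_empty_or_nonempty with rfl | hne
      · simp
      have := hne.to_subtype
      have hclosed (a : c) : IsClosed (range (· * (a : M))) :=
        (isCompact_range (continuous_mul_left a)).isClosed
      have hdirected : Directed (· ⊇ ·) fun a : c => range (· * (a : M)) := by
        have hsub {a b : M} : (∃ p, p * a = b) → range (· * b) ⊆ range (· * a) := by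
          rintro ⟨p, rfl⟩ _ ⟨q, rfl⟩
          exact ⟨q * p, mul_assoc q p a⟩
        intro a b
        rcases eq_or_ne a b with rfl | hab
        · exact ⟨a, subset_rfl, subset_rfl⟩
        rcases hc a.2 b.2 (Subtype.coe_ne_coe.2 hab) with h | h
        · exact ⟨b, hsub h, subset_rfl⟩
        · exact ⟨a, subset_rfl, hsub h⟩
      obtain ⟨z, hz⟩ := IsCompact.nonempty_iInter_of_directed_nonempty_isCompact_isClosed _
        hdirected (fun a => ⟨a * a, a, rfl⟩) (fun a => (hclosed a).isCompact) hclosed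
      exact ⟨z, fun a ha => mem_iInter.1 hz ⟨a, ha⟩⟩)
    (by
      rintro a _ _ ⟨p, rfl⟩ ⟨q, rfl⟩
      exact ⟨q * p, mul_assoc q p a⟩)
  exact ⟨w, fun p => hw (p * w) ⟨p, rfl⟩⟩

theorem ultrafilter_map_mul {M N F : Type*} [Mul M] [Mul N] [FunLike F M N] [MulHomClass F M N]
    (f : F) (U V : Ultrafilter M) : (U * V).map f = U.map f * V.map f := by
  refine Ultrafilter.coe_inj.1 (Filter.ext' fun p => ?_)
  simp only [Ultrafilter.coe_map, Filter.eventually_map, Ultrafilter.eventually_mul, map_mul]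

/-- Take a minimal left ideal `L = βW * w` of `βW`, and let `v` be an idempotent of the compact
semigroup `{u | J ∈ u} * i w`. Each `φ a` sends `v` to an idempotent of `L`, and every
idempotent `q` of `L` is a right identity of `L`. -/
theorem exists_ultrafilter_map_mul_map_eq {ι V W : Type*} [Monoid V] [Monoid W] (φ : ι → V →* W)
    (i : W →* V) (hφ : ∀ a, (φ a).comp i = MonoidHom.id W) {J : Set V} (hJne : J.Nonempty)
    (hJ : ∀ x ∈ J, ∀ y, x * y ∈ J) :
    ∃ v : Ultrafilter V, J ∈ v ∧ ∀ a b, v.map (φ a) * v.map (φ b) = v.map (φ a) := by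
  obtain ⟨w, hw⟩ := exists_minimal_of_compact_t2_of_continuous_mul_left
    (M := Ultrafilter W) Ultrafilter.continuous_mul_left
  have hJmul (u u' : Ultrafilter V) (hu : J ∈ u) : J ∈ u * u' := by
    change ∀ᶠ x in ↑(u * u'), x ∈ J
    rw [Ultrafilter.eventually_mul]
    filter_upwards [hu] with x hx
    exact .of_forall (hJ x hx)
  obtain ⟨_, ⟨u, hu, rfl⟩, hidem⟩ := exists_idempotent_in_compact_subsemigroup
    (M := Ultrafilter V) Ultrafilter.continuous_mul_left ((· * w.map i) '' {u | J ∈ u})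
    (Nonempty.image _ (s := {u | J ∈ u}) ⟨pure hJne.some, hJne.some_mem⟩)
    ((ultrafilter_isClosed_basic J).isCompact.image (Ultrafilter.continuous_mul_left _))
    (by
      rintro _ ⟨u, hu, rfl⟩ _ ⟨u', -, rfl⟩
      exact ⟨u * (w.map i * u'), hJmul _ _ hu, by simp only [mul_assoc]⟩)
  refine ⟨u * w.map i, hJmul _ _ hu, fun a b => ?_⟩
  have hmap (a : ι) : (u * w.map i).map (φ a) = u.map (φ a) * w := by
    rw [ultrafilter_map_mul, Ultrafilter.map_map, ← MonoidHom.coe_comp, hφ]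
    exact congrArg _ (Ultrafilter.map_id w)
  obtain ⟨r, hr⟩ := hw (u.map (φ b))
  have hleft : (u * w.map i).map (φ a) = u.map (φ a) * r * (u * w.map i).map (φ b) := by
    rw [hmap, hmap, mul_assoc, hr]
  rw [hleft, mul_assoc, ← ultrafilter_map_mul, hidem]

theorem exists_monochromatic_eventually_mul_mem {ι M κ : Type*} [Finite ι] [Nonempty ι]
    [Semigroup M] [Finite κ] {p : ι → Ultrafilter M} (hp : ∀ a b, p a * p b = p a) (c : M → κ) :
    ∃ k, ∃ Q ⊆ c ⁻¹' {k}, Q.Nonempty ∧ ∀ x ∈ Q, ∀ a, ∀ᶠ z in p a, x * z ∈ Q := by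
  obtain ⟨a₀⟩ := ‹Nonempty ι›
  obtain ⟨k, hk⟩ : ∃ k, ∀ᶠ x in p a₀, c x = k :=
    Ultrafilter.eventually_exists_iff.1 (.of_forall fun x => ⟨c x, rfl⟩)
  refine ⟨k, {x | c x = k ∧ ∀ a, ∀ᶠ z in p a, c (x * z) = k}, fun x hx => hx.1, ?_, ?_⟩
  · refine (hk.and (Filter.eventually_all.2 fun a => ?_)).exists
    rwa [← Ultrafilter.eventually_mul (p := fun x => c x = k), hp]
  · rintro x ⟨-, hx⟩ a
    refine (hx a).and (Filter.eventually_all.2 fun b => ?_)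
    have h := hx a
    rw [← hp a b, Ultrafilter.eventually_mul] at h
    simpa only [mul_assoc] using h

theorem exists_monochromatic_products {ι V W κ : Type*} [Finite ι] [Nonempty ι] [Finite κ]
    [Monoid V] [Monoid W] (φ : ι → V →* W) (i : W →* V)
    (hφ : ∀ a, (φ a).comp i = MonoidHom.id W) {J : Set V} (hJne : J.Nonempty)
    (hJ : ∀ x ∈ J, ∀ y, x * y ∈ J) (c : W → κ) :
    ∃ (k : κ) (x : W) (y : ℕ → V), (∀ n, y n ∈ J) ∧ ∀ (a : ℕ → ι) (n : ℕ),
      c (x * ((List.range n).map fun i => φ (a i) (y i)).prod) = k := by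
  obtain ⟨v, hJv, hv⟩ := exists_ultrafilter_map_mul_map_eq φ i hφ hJne hJ
  obtain ⟨k, Q, hQk, ⟨x, hx⟩, hQ⟩ := exists_monochromatic_eventually_mul_mem hv c
  have hextend (X : {X : Set W // X.Finite ∧ X ⊆ Q}) :
      ∃ y ∈ J, ∀ z ∈ X.1, ∀ a, z * φ a y ∈ Q := by
    have hX : ∀ᶠ y in v, ∀ z ∈ X.1, ∀ a, z * φ a y ∈ Q :=
      (Filter.eventually_all_finite X.2.1).2 fun z hz =>
        Filter.eventually_all.2 fun a => hQ z (X.2.2 hz) a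
    exact (Filter.Eventually.and hJv hX).exists
  choose y hyJ hyQ using hextend
  let next (X : {X : Set W // X.Finite ∧ X ⊆ Q}) : {X : Set W // X.Finite ∧ X ⊆ Q} :=
    ⟨⋃ a, (· * φ a (y X)) '' X.1, finite_iUnion fun a => X.2.1.image _,
      iUnion_subset fun a => image_subset_iff.2 fun z hz => hyQ X z hz a⟩
  let X (n : ℕ) := next^[n] ⟨{x}, finite_singleton x, singleton_subset_iff.2 hx⟩
  have hmem (a : ℕ → ι) (n : ℕ) :
      x * ((List.range n).map fun i => φ (a i) (y (X i))).prod ∈ (X n).1 := by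
    induction n with
    | zero => simp [X]
    | succ n ih =>
      rw [List.prod_range_succ, ← mul_assoc, show X (n + 1) = next (X n) from
        Function.iterate_succ_apply' next n _]
      exact mem_iUnion.2 ⟨a n, mem_image_of_mem _ ih⟩
  exact ⟨k, x, fun n => y (X n), fun n => hyJ _, fun a n => hQk ((X n).2.2 (hmem a n))⟩

end Ultrafilters

theorem exists_map_range_length_eq {α : Type*} {U : ℕ → List α} (hU : ∀ n, U n <+: U (n + 1))
    (hlen : ∀ n, n ≤ (U n).length) :
    ∃ u : ℕ → α, ∀ n, (List.range (U n).length).map u = U n := by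
  have hprefix {m n : ℕ} (h : m ≤ n) : U m <+: U n :=
    Nat.le_induction List.prefix_rfl (fun n _ ih => ih.trans (hU n)) n h
  refine ⟨fun i => (U (i + 1))[i]'(hlen (i + 1)), fun n => List.ext_getElem (by simp) ?_⟩
  intro i _ hi
  rw [List.getElem_map, List.getElem_range]
  rcases le_total n (i + 1) with h | h
  · exact ((hprefix h).getElem hi).symm
  · exact (hprefix h).getElem (hlen (i + 1))

theorem exists_parameterWord_of_blocks {A : Type*} (x : List A) {y : ℕ → List (Option A)}
    (hy : ∀ n, ∃ t, y n = none :: t) :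
    ∃ (u : ℕ → A ⊕ ℕ) (ℓ : ℕ → ℕ), (∀ m, u (ℓ m) = .inr m) ∧
      (∀ m, ∀ i < ℓ m, ∀ p, u i = .inr p → p < m) ∧
      ∀ (a : ℕ → A) (m : ℕ), (List.range (ℓ m)).map (Sum.elim id a ∘ u) =
        x ++ (List.range m).flatMap fun i => (y i).map (·.getD (a i)) := by
  let block (i : ℕ) : List (A ⊕ ℕ) := (y i).map fun o => o.elim (.inr i) .inl
  let U (n : ℕ) : List (A ⊕ ℕ) := x.map .inl ++ (List.range n).flatMap block
  have hblock (n : ℕ) : ∃ t, block n = .inr n :: t := by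
    obtain ⟨t, ht⟩ := hy n
    exact ⟨_, by simp only [block, ht]; rfl⟩
  have hU (n : ℕ) : U (n + 1) = U n ++ block n := by
    simp only [U, List.range_succ, List.flatMap_append, List.flatMap_singleton, List.append_assoc]
  have hlen (n : ℕ) : n ≤ (U n).length := by
    induction n with
    | zero => exact Nat.zero_le _
    | succ n ih =>
      obtain ⟨t, ht⟩ := hblock n
      simp only [hU, ht, List.length_append, List.length_cons]
      lia
  obtain ⟨u, hu⟩ := exists_map_range_length_eq (fun n => hU n ▸ List.prefix_append _ _) hlen
  refine ⟨u, fun m => (U m).length, fun m => ?_, fun m i hi p hp => ?_, fun a m => ?_⟩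
  · obtain ⟨t, ht⟩ := hblock m
    have h := congrArg (·[(U m).length]?) (hu (m + 1))
    simpa [hU, ht] using h
  · have h : Sum.inr p ∈ U m := by
      rw [← hu m, ← hp]
      exact List.mem_map_of_mem (List.mem_range.2 hi)
    simp only [U, block, List.mem_append, List.mem_map, List.mem_flatMap, List.mem_range] at h
    obtain ⟨_, -, h⟩ | ⟨j, hj, o, -, h⟩ := h
    · cases h
    · cases o <;> cases h
      exact hj
  · have hsubst (i : ℕ) : (block i).map (Sum.elim id a) = (y i).map (·.getD (a i)) := by
      rw [List.map_map]
      exact List.map_congr_left (by rintro (_ | _) - <;> rfl)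
    rw [← List.map_map, hu, List.map_append, List.map_flatMap]
    simp [hsubst]

/-- The **Carlson–Simpson lemma**: `u` is an infinite word with letters in `A` and parameters
in `ℕ`, whose `m`-th parameter first occurs at position `ℓ m`. -/
theorem exists_monochromatic_parameterWord {A κ : Type*} [Finite A] [Nonempty A] [Finite κ]
    (c : List A → κ) :
    ∃ (k : κ) (u : ℕ → A ⊕ ℕ) (ℓ : ℕ → ℕ), (∀ m, u (ℓ m) = .inr m) ∧
      (∀ m, ∀ i < ℓ m, ∀ p, u i = .inr p → p < m) ∧
      ∀ (a : ℕ → A) (m : ℕ), c ((List.range (ℓ m)).map (Sum.elim id a ∘ u)) = k := by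
  obtain ⟨k, x, y, hy, hk⟩ := exists_monochromatic_products
    (fun a : A => FreeMonoid.map fun o : Option A => o.getD a) (FreeMonoid.map some)
    (fun a => by ext; rfl) (J := {y | ∃ t, FreeMonoid.toList y = none :: t})
    ⟨FreeMonoid.ofList [none], [], rfl⟩
    (by rintro _ ⟨t, ht⟩ z; exact ⟨t ++ z.toList, by rw [FreeMonoid.toList_mul, ht]; rfl⟩)
    (fun w => c w.toList)
  obtain ⟨u, ℓ, hℓ, hlt, hu⟩ := exists_parameterWord_of_blocks x.toList hy
  refine ⟨k, u, ℓ, hℓ, hlt, fun a m => ?_⟩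
  rw [hu, ← hk a m, FreeMonoid.toList_mul, FreeMonoid.toList_prod, List.map_map, List.flatMap_def]
  rfl

/-! ### The Souslin operation -/

theorem exists_forall_map_range_mem {α : Type*} {T : Set (List α)} (hnil : [] ∈ T)
    (hT : ∀ s ∈ T, ∃ a, s ++ [a] ∈ T) : ∃ x : ℕ → α, ∀ n, (List.range n).map x ∈ T := by
  choose next hnext using hT
  let U (n : ℕ) : T := n.rec ⟨[], hnil⟩ fun _ s => ⟨s.1 ++ [next s.1 s.2], hnext s.1 s.2⟩
  have hlen (n : ℕ) : (U n).1.length = n := by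
    induction n with
    | zero => rfl
    | succ n ih => exact List.length_append.trans (congrArg (· + 1) ih)
  obtain ⟨x, hx⟩ := exists_map_range_length_eq (U := fun n => (U n).1)
    (fun n => List.prefix_append _ _) fun n => (hlen n).ge
  refine ⟨x, fun n => ?_⟩
  have h := hx n
  rw [hlen] at h
  exact h ▸ (U n).2

theorem preimage_souslinOp {X Y : Type*} (f : X → Y) (A : List ℕ → Set Y) :
    f ⁻¹' souslinOp A = souslinOp fun s => f ⁻¹' A s := by
  simp only [souslinOp, preimage_iUnion, preimage_iInter]

theorem SouslinMeasurable.measurableSet_preimage {X Y : Type*} [MeasurableSpace X]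
    {t : TopologicalSpace Y} {S : Set Y} (hS : SouslinMeasurable t S) {f : X → Y}
    (hopen : ∀ U, t.IsOpen U → MeasurableSet (f ⁻¹' U))
    (hsouslin : ∀ A : List ℕ → Set X, (∀ s, MeasurableSet (A s)) → MeasurableSet (souslinOp A)) :
    MeasurableSet (f ⁻¹' S) := by
  refine hS {S | MeasurableSet (f ⁻¹' S)} hopen (fun _ hA => hA.compl)
    (fun _ hA _ hB => hA.union hB) fun A hA => ?_
  rw [mem_ofPred_eq, preimage_souslinOp]
  exact hsouslin _ hA

/-- The part of `souslinOp A` that comes from the branches through `s`. -/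
def souslinPart {X : Type*} (A : List ℕ → Set X) (s : List ℕ) : Set X :=
  ⋃ (x : ℕ → ℕ) (_ : (List.range s.length).map x = s), ⋂ n, A ((List.range n).map x)

theorem mem_souslinPart {X : Type*} {A : List ℕ → Set X} {s : List ℕ} {z : X} :
    z ∈ souslinPart A s ↔
      ∃ x : ℕ → ℕ, (List.range s.length).map x = s ∧ ∀ n, z ∈ A ((List.range n).map x) := by
  simp only [souslinPart, mem_iUnion, mem_iInter, exists_prop]

theorem souslinPart_nil {X : Type*} (A : List ℕ → Set X) : souslinPart A [] = souslinOp A := by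
  simp only [souslinPart, souslinOp, List.length_nil, List.range_zero, List.map_nil, iUnion_true]

theorem souslinPart_subset {X : Type*} (A : List ℕ → Set X) (s : List ℕ) :
    souslinPart A s ⊆ A s := by
  intro z hz
  obtain ⟨x, hx, hz⟩ := mem_souslinPart.1 hz
  exact hx ▸ hz s.length

theorem souslinPart_subset_iUnion {X : Type*} (A : List ℕ → Set X) (s : List ℕ) :
    souslinPart A s ⊆ ⋃ k, souslinPart A (s ++ [k]) := by
  intro z hz
  obtain ⟨x, hx, hz⟩ := mem_souslinPart.1 hz
  refine mem_iUnion.2 ⟨x s.length, mem_souslinPart.2 ⟨x, ?_, hz⟩⟩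
  rw [List.length_append, List.length_singleton, List.range_succ, List.map_append, hx,
    List.map_singleton]

/-- **Marczewski's theorem**: a σ-algebra in which every set `B` has a measurable hull `H`, unique
up to sets all of whose subsets are measurable, is closed under the Souslin operation. -/
theorem measurableSet_souslinOp {X : Type*} [MeasurableSpace X]
    (hull : ∀ B : Set X, ∃ H, MeasurableSet H ∧ B ⊆ H ∧
      ∀ C, MeasurableSet C → B ⊆ C → ∀ D ⊆ H \ C, MeasurableSet D)
    {A : List ℕ → Set X} (hA : ∀ s, MeasurableSet (A s)) : MeasurableSet (souslinOp A) := by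
  choose H hH hsub hmin using fun s => hull (souslinPart A s)
  let E (s : List ℕ) : Set X := H s ∩ A s
  have hE (s : List ℕ) : MeasurableSet (E s) := (hH s).inter (hA s)
  have hsubE (s : List ℕ) : souslinPart A s ⊆ E s :=
    subset_inter (hsub s) (souslinPart_subset A s)
  let N (s : List ℕ) : Set X := E s \ ⋃ k, E (s ++ [k])
  have hN (s : List ℕ) : ∀ D ⊆ N s, MeasurableSet D := fun D hD =>
    hmin s _ (.iUnion fun k => hE _)
      ((souslinPart_subset_iUnion A s).trans (iUnion_mono fun k => hsubE _)) D
      (hD.trans (sdiff_subset_sdiff_left inter_subset_left))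
  have hcover : E [] \ souslinOp A ⊆ ⋃ s, N s := by
    rintro z ⟨hz, hzA⟩
    by_contra hzN
    have hnext : ∀ s, z ∈ E s → ∃ k, z ∈ E (s ++ [k]) := fun s hs => by
      by_contra! h
      exact hzN (mem_iUnion.2 ⟨s, hs, fun h' => (mem_iUnion.1 h').elim h⟩)
    obtain ⟨x, hx⟩ := exists_forall_map_range_mem (T := {s | z ∈ E s}) hz hnext
    exact hzA (mem_iUnion.2 ⟨x, mem_iInter.2 fun n => (hx n).2⟩)
  have hdiff : MeasurableSet (E [] \ souslinOp A) := by
    rw [← inter_eq_right.2 hcover, iUnion_inter]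
    exact .iUnion fun s => hN s _ inter_subset_left
  rw [← sdiff_sdiff_cancel_left (souslinPart_nil A ▸ hsubE [] : souslinOp A ⊆ E [])]
  exact (hE []).diff hdiff

/-! ### Rigid surjections -/

/-- A surjection of `ℕ` whose values first occur in increasing order. Each equivalence relation
on `ℕ` with infinitely many classes is the kernel of exactly one rigid surjection, which sends a
number to the index of its class; coarsening it means composing with a rigid surjection on the
left. -/
@[ext]
structure RigidSurj where
  toFun : ℕ → ℕ
  exists_lt_apply_eq' : ∀ x, ∀ k < toFun x, ∃ y < x, toFun y = k
  surjective' : Function.Surjective toFun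

namespace RigidSurj

instance : FunLike RigidSurj ℕ ℕ where
  coe := toFun
  coe_injective _ _ := RigidSurj.ext

theorem exists_lt_apply_eq (e : RigidSurj) {x k : ℕ} (h : k < e x) : ∃ y < x, e y = k :=
  e.exists_lt_apply_eq' x k h

theorem surjective (e : RigidSurj) : Function.Surjective e := e.surjective'

theorem apply_le (e : RigidSurj) (x : ℕ) : e x ≤ x := by
  induction x using Nat.strong_induction_on with
  | _ x ih =>
    by_contra! h
    obtain ⟨y, hy, hyx⟩ := e.exists_lt_apply_eq h
    exact (ih y hy).not_gt (hyx ▸ hy)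

/-- Builds a rigid surjection from a rigid function that is only known to be unbounded. -/
def ofUnbounded (f : ℕ → ℕ) (hf : ∀ x, ∀ k < f x, ∃ y < x, f y = k) (hub : ∀ k, ∃ x, k ≤ f x) :
    RigidSurj where
  toFun := f
  exists_lt_apply_eq' := hf
  surjective' k := by
    obtain ⟨x, hx⟩ := hub (k + 1)
    obtain ⟨y, -, hy⟩ := hf x k hx
    exact ⟨y, hy⟩

@[simp]
theorem coe_ofUnbounded (f : ℕ → ℕ) (hf hub) : ⇑(ofUnbounded f hf hub) = f := rfl

/-- Multiplication is composition. -/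
instance : Monoid RigidSurj where
  mul e f :=
    { toFun := e ∘ f
      exists_lt_apply_eq' := fun x k hk => by
        obtain ⟨y, hy, rfl⟩ := e.exists_lt_apply_eq hk
        obtain ⟨z, hz, rfl⟩ := f.exists_lt_apply_eq hy
        exact ⟨z, hz, rfl⟩
      surjective' := e.surjective.comp f.surjective }
  one := ⟨id, fun _ k hk => ⟨k, hk, rfl⟩, Function.surjective_id⟩
  mul_assoc _ _ _ := rfl
  one_mul _ := rfl
  mul_one _ := rfl

@[simp]
theorem mul_apply (e f : RigidSurj) (x : ℕ) : (e * f) x = e (f x) := rfl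

/-- The first position at which `e` takes the value `k`. -/
noncomputable def firstOcc (e : RigidSurj) (k : ℕ) : ℕ := Nat.find (e.surjective k)

@[simp]
theorem apply_firstOcc (e : RigidSurj) (k : ℕ) : e (e.firstOcc k) = k :=
  Nat.find_spec (e.surjective k)

theorem apply_lt_of_lt_firstOcc {e : RigidSurj} {k x : ℕ} (h : x < e.firstOcc k) : e x < k := by
  refine lt_of_le_of_ne (not_lt.1 fun hk => ?_) (Nat.find_min (e.surjective k) h)
  obtain ⟨y, hy, hyk⟩ := e.exists_lt_apply_eq hk
  exact Nat.find_min (e.surjective k) (hy.trans h) hyk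

theorem firstOcc_le {e : RigidSurj} {x k : ℕ} (h : k ≤ e x) : e.firstOcc k ≤ x :=
  not_lt.1 fun hx => (apply_lt_of_lt_firstOcc hx).not_ge h

theorem firstOcc_eq {e : RigidSurj} {n k : ℕ} (hn : e n = k) (hlt : ∀ x < n, e x < k) :
    e.firstOcc k = n :=
  (firstOcc_le hn.ge).antisymm (not_lt.1 fun h => (hlt _ h).ne (e.apply_firstOcc k))

theorem firstOcc_strictMono (e : RigidSurj) : StrictMono e.firstOcc := fun k l hkl => by
  obtain ⟨y, hy, rfl⟩ := e.exists_lt_apply_eq (hkl.trans_eq (e.apply_firstOcc l).symm)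
  exact (firstOcc_le le_rfl).trans_lt hy

theorem le_firstOcc (e : RigidSurj) (k : ℕ) : k ≤ e.firstOcc k := by
  simpa using e.apply_le (e.firstOcc k)

theorem exists_mul_eq_of_factorsThrough {f g : RigidSurj} (h : Function.FactorsThrough g f) :
    ∃ e, e * f = g := by
  have hg (x : ℕ) : g (f.firstOcc (f x)) = g x := h (apply_firstOcc f (f x))
  refine ⟨⟨g ∘ f.firstOcc, fun x k hk => ?_, fun k => ?_⟩, RigidSurj.ext (funext hg)⟩
  · obtain ⟨y, hy, rfl⟩ := g.exists_lt_apply_eq hk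
    exact ⟨f y, apply_lt_of_lt_firstOcc hy, hg y⟩
  · obtain ⟨x, rfl⟩ := g.surjective k
    exact ⟨f x, hg x⟩

/-- The rigid surjections that are the identity on `{0, …, n}`. -/
def fixing (n : ℕ) : Submonoid RigidSurj where
  carrier := {e | ∀ x ≤ n, e x = x}
  one_mem' _ _ := rfl
  mul_mem' he hf x hx := by rw [mul_apply, hf x hx, he x hx]

theorem fixing_antitone : Antitone fixing := fun _ _ hmn _ he x hx => he x (hx.trans hmn)

/-- The basic neighbourhood of `g` that consists of the coarsenings of `g` in which the first
`n + 1` classes of `g` remain separate. -/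
def cyl (n : ℕ) (g : RigidSurj) : Set RigidSurj := (· * g) '' fixing n

theorem mem_cyl_iff {n : ℕ} {f g : RigidSurj} :
    g ∈ cyl n f ↔ Function.FactorsThrough g f ∧ ∀ x, f x ≤ n → g x = f x := by
  constructor
  · rintro ⟨e, he, rfl⟩
    exact ⟨fun _ _ h => congrArg e h, fun x hx => he _ hx⟩
  · rintro ⟨hgf, hfix⟩
    obtain ⟨e, rfl⟩ := exists_mul_eq_of_factorsThrough hgf
    refine ⟨e, fun x hx => ?_, rfl⟩
    obtain ⟨y, rfl⟩ := f.surjective x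
    exact hfix y hx

theorem self_mem_cyl (n : ℕ) (g : RigidSurj) : g ∈ cyl n g := ⟨1, one_mem _, rfl⟩

theorem cyl_antitone (g : RigidSurj) : Antitone (cyl · g) := fun _ _ hmn =>
  image_mono (fixing_antitone hmn)

theorem cyl_subset {n : ℕ} {g h : RigidSurj} (hh : h ∈ cyl n g) : cyl n h ⊆ cyl n g := by
  obtain ⟨e, he, rfl⟩ := hh
  rintro _ ⟨e', he', rfl⟩
  exact ⟨e' * e, mul_mem he' he, rfl⟩

theorem mul_mem_cyl_mul {n : ℕ} {e f : RigidSurj} (h : e ∈ cyl n f) (g : RigidSurj) :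
    e * g ∈ cyl n (f * g) := by
  obtain ⟨e, he, rfl⟩ := h
  exact ⟨e, he, rfl⟩

/-- From `n` on, `s` is a translation, and `s n` is a new value. Such `s` stand for the finite
approximations of coarsenings: they merge finitely many classes and keep the others. -/
structure IsShiftFrom (n : ℕ) (s : RigidSurj) : Prop where
  apply_add : ∀ x, s (n + x) = s n + x
  apply_lt : ∀ x < n, s x < s n

/-- The rigid surjection that agrees with `e` up to `n` and is a translation from `n` on. -/
def truncate (e : RigidSurj) (n : ℕ) : RigidSurj :=
  ofUnbounded (fun x => e (min x n) + (x - n))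
    (fun x k hk => by
      rcases lt_or_ge k (e (min x n)) with h | h
      · obtain ⟨y, hy, rfl⟩ := e.exists_lt_apply_eq h
        have hy' := lt_min_iff.1 hy
        exact ⟨y, hy'.1, by simp [hy'.2.le]⟩
      · have hx : n ≤ x := by lia
        rw [min_eq_right hx] at h hk
        exact ⟨n + (k - e n), by lia, by simp; lia⟩)
    (fun k => ⟨n + k, by simp⟩)

theorem truncate_apply (e : RigidSurj) (n x : ℕ) :
    e.truncate n x = e (min x n) + (x - n) := rfl

theorem truncate_apply_of_le (e : RigidSurj) {n x : ℕ} (h : x ≤ n) : e.truncate n x = e x := by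
  simp [truncate_apply, h]

theorem isShiftFrom_truncate {e : RigidSurj} {n : ℕ} (h : ∀ x < n, e x < e n) :
    IsShiftFrom n (e.truncate n) where
  apply_add x := by simp [truncate_apply]
  apply_lt x hx := by simpa [truncate_apply, hx.le] using h x hx

namespace IsShiftFrom

variable {n : ℕ} {s : RigidSurj}

theorem apply_lt_apply (hs : IsShiftFrom n s) {x y : ℕ} (hy : n ≤ y) (hxy : x < y) : s x < s y := by
  obtain ⟨y, rfl⟩ := Nat.exists_eq_add_of_le hy
  rcases lt_or_ge x n with hx | hx
  · rw [hs.apply_add]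
    exact Nat.lt_add_right y (hs.apply_lt x hx)
  · obtain ⟨x, rfl⟩ := Nat.exists_eq_add_of_le hx
    rw [hs.apply_add, hs.apply_add]
    lia

theorem apply_le_apply (hs : IsShiftFrom n s) {x y : ℕ} (hy : n ≤ y) (hxy : x ≤ y) : s x ≤ s y :=
  hxy.eq_or_lt.elim (fun h => (congrArg s h).le) fun h => (hs.apply_lt_apply hy h).le

theorem le_of_apply_le (hs : IsShiftFrom n s) {x : ℕ} (hx : s x ≤ s n) : x ≤ n :=
  not_lt.1 fun h => (hs.apply_lt_apply h.le h).not_ge hx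

theorem firstOcc_apply (hs : IsShiftFrom n s) {x : ℕ} (hx : n ≤ x) : s.firstOcc (s x) = x :=
  firstOcc_eq rfl fun _ => hs.apply_lt_apply hx

theorem mem_cyl (hs : IsShiftFrom n s) {e : RigidSurj} (he : ∀ x ≤ n, e x = s x) :
    e ∈ cyl (s n) s := by
  refine mem_cyl_iff.2 ⟨fun a b hab => ?_, fun x hx => he x (hs.le_of_apply_le hx)⟩
  have hlt {a b : ℕ} (h : a < b) (hab : s a = s b) : e a = e b := by
    have hb : b < n := not_le.1 fun hb => (hs.apply_lt_apply hb h).ne hab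
    rw [he a (h.trans hb).le, he b hb.le, hab]
  rcases lt_trichotomy a b with h | rfl | h
  exacts [hlt h hab, rfl, (hlt h hab.symm).symm]

theorem mul_mem_cyl (hs : IsShiftFrom n s) {g g' : RigidSurj} (h : g' ∈ cyl n g) :
    s * g' ∈ cyl (s n) (s * g) := by
  obtain ⟨e, he, rfl⟩ := h
  rw [← mul_assoc]
  refine mul_mem_cyl_mul (hs.mem_cyl fun x hx => ?_) g
  rw [mul_apply, he x hx]

/-- On the positions from `n` on, `s.firstOcc` is inverse to `s`, so that `h` can be conjugated
by `s` there. -/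
theorem exists_mul_eq_mul (hs : IsShiftFrom n s) {h : RigidSurj} (hh : h ∈ fixing (s n)) :
    ∃ h' ∈ fixing n, s * h' = h * s := by
  let f (x : ℕ) : ℕ := if x < n then x else s.firstOcc (h (s x))
  have hf_of_lt {x : ℕ} (hx : x < n) : f x = x := if_pos hx
  have hf_of_le {x : ℕ} (hx : n ≤ x) : f x = s.firstOcc (h (s x)) := if_neg hx.not_gt
  have hrigid (x k : ℕ) (hk : k < f x) : ∃ y < x, f y = k := by
    rcases lt_or_ge x n with hx | hx
    · rw [hf_of_lt hx] at hk
      exact ⟨k, hk, hf_of_lt (hk.trans hx)⟩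
    rcases lt_or_ge k n with hkn | hkn
    · exact ⟨k, hkn.trans_le hx, hf_of_lt hkn⟩
    rw [hf_of_le hx] at hk
    obtain ⟨z, hz, hzk⟩ := h.exists_lt_apply_eq (apply_lt_of_lt_firstOcc hk)
    have hnz : s n ≤ z := not_lt.1 fun hlt =>
      (hs.apply_le_apply hkn hkn).not_gt (hzk ▸ (hh z hlt.le).symm ▸ hlt)
    obtain ⟨y, rfl⟩ := Nat.exists_eq_add_of_le hnz
    rw [← hs.apply_add] at hz hzk
    exact ⟨n + y, not_le.1 fun hxy => (hs.apply_le_apply (Nat.le_add_right n y) hxy).not_gt hz,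
      by rw [hf_of_le (Nat.le_add_right n y), hzk, hs.firstOcc_apply hkn]⟩
  refine ⟨ofUnbounded f hrigid fun k => ?_, fun x hx => ?_, RigidSurj.ext (funext fun x => ?_)⟩
  · obtain ⟨z, hz⟩ := h.surjective (max k (s n))
    obtain ⟨y, rfl⟩ := Nat.exists_eq_add_of_le ((le_max_right k (s n)).trans (hz ▸ h.apply_le z))
    refine ⟨n + y, ?_⟩
    rw [hf_of_le (Nat.le_add_right n y), hs.apply_add, hz]
    exact (le_max_left _ _).trans (le_firstOcc s _)
  · rcases hx.lt_or_eq with hx | rfl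
    · exact hf_of_lt hx
    · rw [coe_ofUnbounded, hf_of_le le_rfl, hh _ le_rfl, hs.firstOcc_apply le_rfl]
  · change s (f x) = h (s x)
    rcases lt_or_ge x n with hx | hx
    · rw [hf_of_lt hx, hh _ (hs.apply_lt x hx).le]
    · rw [hf_of_le hx, apply_firstOcc]

theorem exists_mem_cyl_mul_eq (hs : IsShiftFrom n s) {g g' : RigidSurj}
    (h : g' ∈ cyl (s n) (s * g)) : ∃ g'' ∈ cyl n g, s * g'' = g' := by
  obtain ⟨e, he, rfl⟩ := h
  obtain ⟨e', he', h⟩ := hs.exists_mul_eq_mul he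
  exact ⟨e' * g, ⟨e', he', rfl⟩, by rw [← mul_assoc, h, mul_assoc]⟩

end IsShiftFrom

theorem finite_setOf_isShiftFrom (n : ℕ) : {s | IsShiftFrom n s}.Finite := by
  refine Finite.of_finite_image (f := fun s (x : Fin (n + 1)) => s x)
    ((Finite.pi' fun x : Fin (n + 1) => finite_Iic (x : ℕ)).subset ?_) ?_
  · rintro _ ⟨s, -, rfl⟩ x
    exact s.apply_le x
  · intro s hs t ht hst
    have hle (x : ℕ) (hx : x ≤ n) : s x = t x := congrFun hst ⟨x, by lia⟩
    refine RigidSurj.ext (funext fun x => ?_)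
    change s x = t x
    rcases le_total x n with hx | hx
    · exact hle x hx
    · obtain ⟨x, rfl⟩ := Nat.exists_eq_add_of_le hx
      rw [IsShiftFrom.apply_add hs, IsShiftFrom.apply_add ht, hle n le_rfl]

theorem exists_isShiftFrom_mem_cyl (e : RigidSurj) (j : ℕ) :
    ∃ s, IsShiftFrom (e.firstOcc j) s ∧ s (e.firstOcc j) = j ∧
      ∀ f : RigidSurj, (∀ x ≤ e.firstOcc j, f x = e x) → f ∈ cyl j s := by
  have hs := isShiftFrom_truncate (e := e) (n := e.firstOcc j) fun x hx => by
    simpa using apply_lt_of_lt_firstOcc hx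
  have hj : e.truncate (e.firstOcc j) (e.firstOcc j) = j := by
    rw [truncate_apply_of_le e le_rfl, apply_firstOcc]
  refine ⟨_, hs, hj, fun f hf => ?_⟩
  have hmem := hs.mem_cyl (e := f) fun x hx => (hf x hx).trans (truncate_apply_of_le e hx).symm
  rwa [hj] at hmem

/-! ### Fusion -/

theorem exists_mem_cyl_of_forall_mem_cyl {k : ℕ} {F : ℕ → RigidSurj}
    (hF : ∀ n, F (n + 1) ∈ cyl (k + n) (F n)) : ∃ G, ∀ n, G ∈ cyl (k + n) (F n) := by
  have hmem {m n : ℕ} (hmn : m ≤ n) : F n ∈ cyl (k + m) (F m) := by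
    induction n, hmn using Nat.le_induction with
    | base => exact self_mem_cyl _ _
    | succ n hmn ih =>
      exact cyl_subset ih (cyl_antitone _ (Nat.add_le_add_left hmn k) (hF n))
  have hdiag {x n : ℕ} (hx : x ≤ n) : F n x = F x x :=
    (mem_cyl_iff.1 (hmem hx)).2 x (((F x).apply_le x).trans (Nat.le_add_left x k))
  let G : RigidSurj :=
    { toFun := fun x => F x x
      exists_lt_apply_eq' := fun x k hk => by
        obtain ⟨y, hy, rfl⟩ := (F x).exists_lt_apply_eq hk
        exact ⟨y, hy, (hdiag hy.le).symm⟩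
      surjective' := fun j => by
        obtain ⟨x, hx⟩ := (F j).surjective j
        refine ⟨x, ?_⟩
        change F x x = j
        rw [← hdiag (le_max_left x j), ((mem_cyl_iff.1 (hmem (le_max_right x j))).2 x _), hx]
        exact hx.le.trans (Nat.le_add_left j k) }
  refine ⟨G, fun n => mem_cyl_iff.2 ⟨fun a b hab => ?_, fun x hx => ?_⟩⟩
  · change F a a = F b b
    rw [← hdiag ((le_max_left a b).trans (le_max_right n _)),
      ← hdiag ((le_max_right a b).trans (le_max_right n _))]
    exact (mem_cyl_iff.1 (hmem (le_max_left n _))).1 hab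
  · change F x x = F n x
    rw [← hdiag (le_max_right n x)]
    exact (mem_cyl_iff.1 (hmem (le_max_left n x))).2 x hx

section Fusion

variable {D : ℕ → RigidSurj → Prop} (hered : ∀ k g, D k g → ∀ g' ∈ cyl k g, D k g')
  (dense : ∀ k g, ∃ g' ∈ cyl k g, D k g')
include hered dense

theorem exists_mem_cyl_forall_isShiftFrom (n : ℕ) (g : RigidSurj) :
    ∃ g' ∈ cyl n g, ∀ s, IsShiftFrom n s → D (s n) (s * g') := by
  have hfin (T : Set RigidSurj) (hT : T.Finite) (hTn : ∀ s ∈ T, IsShiftFrom n s) :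
      ∃ g' ∈ cyl n g, ∀ s ∈ T, D (s n) (s * g') := by
    induction T, hT using Set.Finite.induction_on with
    | empty => exact ⟨g, self_mem_cyl n g, by simp⟩
    | @insert s T _ _ ih =>
      obtain ⟨g₁, hg₁, hT⟩ := ih fun t ht => hTn t (mem_insert_of_mem s ht)
      obtain ⟨g₂, hg₂, hD⟩ := dense (s n) (s * g₁)
      obtain ⟨g₃, hg₃, rfl⟩ := (hTn s (mem_insert s T)).exists_mem_cyl_mul_eq hg₂
      refine ⟨g₃, cyl_subset hg₁ hg₃, forall_mem_insert.2 ⟨hD, fun t ht => ?_⟩⟩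
      exact hered _ _ (hT t ht) _ ((hTn t (mem_insert_of_mem s ht)).mul_mem_cyl hg₃)
  exact hfin _ (finite_setOf_isShiftFrom n) fun _ => id

theorem exists_mem_cyl_forall_mul (k : ℕ) (f : RigidSurj) :
    ∃ g ∈ cyl k f, ∀ e j, k ≤ j → D j (e * g) := by
  choose! next hnext hD using exists_mem_cyl_forall_isShiftFrom hered dense
  let F (n : ℕ) : RigidSurj := n.rec f fun n g => next (k + n) g
  obtain ⟨G, hG⟩ := exists_mem_cyl_of_forall_mem_cyl (F := F) (k := k) fun n => hnext _ _
  refine ⟨G, hG 0, fun e j hj => ?_⟩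
  obtain ⟨s, hs, hsj, hes⟩ := exists_isShiftFrom_mem_cyl e j
  obtain ⟨n, hn⟩ := Nat.exists_eq_add_of_le (hj.trans (e.le_firstOcc j))
  rw [hn] at hs hsj
  have hDs : D j (s * F (n + 1)) := hsj ▸ hD (k + n) (F n) s hs
  have hGs : s * G ∈ cyl j (s * F (n + 1)) :=
    hsj ▸ hs.mul_mem_cyl (cyl_antitone _ (Nat.le_succ (k + n)) (hG (n + 1)))
  exact hered _ _ (hered _ _ hDs _ hGs) _ (mul_mem_cyl_mul (hes e fun _ _ => rfl) G)

end Fusion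

/-! ### The pigeonhole principle -/

theorem exists_mem_fixing_apply_add {j : ℕ} {u : ℕ → Fin (j + 1) ⊕ ℕ} {ℓ : ℕ → ℕ}
    (hℓ : ∀ m, u (ℓ m) = .inr m) (hlt : ∀ m, ∀ i < ℓ m, ∀ p, u i = .inr p → p < m) :
    ∃ h ∈ fixing j, ∀ i, h (j + 1 + i) = Sum.elim Fin.val (j + 1 + ·) (u i) := by
  let f (x : ℕ) : ℕ := if x ≤ j then x else Sum.elim Fin.val (j + 1 + ·) (u (x - (j + 1)))
  have hf_of_le {x : ℕ} (hx : x ≤ j) : f x = x := if_pos hx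
  have hf_add (i : ℕ) : f (j + 1 + i) = Sum.elim Fin.val (j + 1 + ·) (u i) := by
    simp only [f, if_neg (show ¬ j + 1 + i ≤ j by lia), Nat.add_sub_cancel_left]
  have hf_ℓ (m : ℕ) : f (j + 1 + ℓ m) = j + 1 + m := by rw [hf_add, hℓ, Sum.elim_inr]
  refine ⟨ofUnbounded f (fun x k hk => ?_) fun k => ⟨j + 1 + ℓ k, (hf_ℓ k).ge.trans' (by lia)⟩,
    fun x => hf_of_le, hf_add⟩
  rcases le_or_gt x j with hx | hx
  · rw [hf_of_le hx] at hk
    exact ⟨k, hk, hf_of_le (hk.le.trans hx)⟩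
  rcases le_or_gt k j with hkj | hkj
  · exact ⟨k, hkj.trans_lt hx, hf_of_le hkj⟩
  obtain ⟨i, rfl⟩ := Nat.exists_eq_add_of_le hx
  obtain ⟨p, rfl⟩ := Nat.exists_eq_add_of_le hkj
  rw [hf_add] at hk
  rcases hi : u i with a | q
  · rw [hi, Sum.elim_inl] at hk
    lia
  · rw [hi, Sum.elim_inr] at hk
    refine ⟨j + 1 + ℓ p, Nat.add_lt_add_left (not_le.1 fun hle => ?_) _, hf_ℓ p⟩
    rcases hle.eq_or_lt with rfl | hip
    · have := Sum.inr_injective ((hℓ p).symm.trans hi)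
      lia
    · have := hlt p i hip q hi
      lia

theorem eq_of_map_range_firstOcc_eq {κ : Type*} {j : ℕ} {Q : RigidSurj → κ}
    (hQ : ∀ g, ∀ e ∈ cyl j g, Q e = Q g) {e e' : RigidSurj}
    (h : (List.range (e.firstOcc j)).map e = (List.range (e'.firstOcc j)).map e') :
    Q e = Q e' := by
  have hn : e.firstOcc j = e'.firstOcc j := by simpa using congrArg List.length h
  rw [← hn, List.map_inj_left] at h
  obtain ⟨s, -, -, hs⟩ := exists_isShiftFrom_mem_cyl e j
  rw [hQ s e (hs e fun _ _ => rfl), hQ s e' (hs e' fun x hx => ?_)]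
  rcases hx.eq_or_lt with rfl | hx
  · rw [apply_firstOcc, hn, apply_firstOcc]
  · exact (h x (List.mem_range.2 hx)).symm

theorem exists_map_range_firstOcc_mul_eq {j : ℕ} {u : ℕ → Fin (j + 1) ⊕ ℕ} {ℓ : ℕ → ℕ}
    (hℓ : ∀ m, u (ℓ m) = .inr m) (hlt : ∀ m, ∀ i < ℓ m, ∀ p, u i = .inr p → p < m)
    {e h : RigidSurj} (he : e ∈ fixing j) (hh : h ∈ fixing j)
    (hu : ∀ i, h (j + 1 + i) = Sum.elim Fin.val (j + 1 + ·) (u i)) :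
    ∃ (a : ℕ → Fin (j + 1)) (m : ℕ),
      (List.range ((e * h).firstOcc (j + 1))).map (e * h) =
        List.range (j + 1) ++ ((List.range (ℓ m)).map (Sum.elim id a ∘ u)).map Fin.val := by
  obtain ⟨m, hm⟩ := Nat.exists_eq_add_of_le (e.le_firstOcc (j + 1))
  let a (p : ℕ) : Fin (j + 1) := Fin.ofNat (j + 1) (e (j + 1 + p))
  have hinit : ∀ x < j + 1, (e * h) x = x := fun x hx =>
    mul_mem he hh x (Nat.lt_succ_iff.1 hx)
  have hblock : ∀ i < ℓ m, (e * h) (j + 1 + i) = (Sum.elim id a (u i)).val := by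
    intro i hi
    rw [mul_apply, hu]
    rcases hui : u i with b | p
    · exact he b (Nat.lt_succ_iff.1 b.2)
    · have hp : j + 1 + p < e.firstOcc (j + 1) := hm ▸ Nat.add_lt_add_left (hlt m i hi p hui) _
      exact (Nat.mod_eq_of_lt (apply_lt_of_lt_firstOcc hp)).symm
  have hocc : (e * h).firstOcc (j + 1) = j + 1 + ℓ m := by
    refine firstOcc_eq ?_ fun x hx => ?_
    · rw [mul_apply, hu, hℓ, Sum.elim_inr, ← hm, apply_firstOcc]
    · rcases lt_or_ge x (j + 1) with hxj | hxj
      · rwa [hinit x hxj]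
      · obtain ⟨i, rfl⟩ := Nat.exists_eq_add_of_le hxj
        rw [hblock i (Nat.add_lt_add_iff_left.1 hx)]
        exact Fin.isLt _
  refine ⟨a, m, ?_⟩
  rw [hocc, List.range_add, List.map_append, List.map_map, List.map_map]
  congr 1
  · exact (List.map_congr_left fun x hx => hinit x (List.mem_range.1 hx)).trans (List.map_id _)
  · exact List.map_congr_left fun i hi => hblock i (List.mem_range.1 hi)

/-- A colouring that only depends on the restriction of `e` to the positions before the first
occurrence of `j + 1` is a colouring of words over `{0, …, j}`. -/
theorem exists_forall_mul_eq {κ : Type*} [Finite κ] {j : ℕ} {Q : RigidSurj → κ}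
    (hQ : ∀ g, ∀ e ∈ cyl (j + 1) g, Q e = Q g) :
    ∃ h ∈ fixing j, ∃ b, ∀ e ∈ fixing j, Q (e * h) = b := by
  have hfactor : Function.FactorsThrough Q fun e => (List.range (e.firstOcc (j + 1))).map e :=
    fun e e' => eq_of_map_range_firstOcc_eq hQ
  have : Nonempty κ := ⟨Q 1⟩
  obtain ⟨c, rfl⟩ := (Function.factorsThrough_iff Q).1 hfactor
  obtain ⟨b, u, ℓ, hℓ, hlt, hc⟩ := exists_monochromatic_parameterWord
    fun w : List (Fin (j + 1)) => c (List.range (j + 1) ++ w.map Fin.val)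
  obtain ⟨h, hh, hu⟩ := exists_mem_fixing_apply_add hℓ hlt
  refine ⟨h, hh, b, fun e he => ?_⟩
  obtain ⟨a, m, ham⟩ := exists_map_range_firstOcc_mul_eq hℓ hlt he hh hu
  rw [Function.comp_apply, ham, hc]

/-! ### Completely Ramsey sets -/

/-- The Ellentuck topology, in which the sets `cyl n g` are basic neighbourhoods of `g`. -/
instance : TopologicalSpace RigidSurj where
  IsOpen O := ∀ g ∈ O, ∃ n, cyl n g ⊆ O
  isOpen_univ _ _ := ⟨0, subset_univ _⟩
  isOpen_inter O P hO hP g hg := by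
    obtain ⟨m, hm⟩ := hO g hg.1
    obtain ⟨n, hn⟩ := hP g hg.2
    exact ⟨max m n, subset_inter ((cyl_antitone g (le_max_left m n)).trans hm)
      ((cyl_antitone g (le_max_right m n)).trans hn)⟩
  isOpen_sUnion 𝒰 h𝒰 := by
    rintro g ⟨O, hO, hg⟩
    obtain ⟨n, hn⟩ := h𝒰 O hO g hg
    exact ⟨n, hn.trans (subset_sUnion_of_mem hO)⟩

theorem isOpen_iff_exists_cyl_subset {O : Set RigidSurj} :
    IsOpen O ↔ ∀ g ∈ O, ∃ n, cyl n g ⊆ O := Iff.rfl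

theorem isOpen_cyl (n : ℕ) (g : RigidSurj) : IsOpen (cyl n g) := fun _ hh => ⟨n, cyl_subset hh⟩

/-- Every basic neighbourhood shrinks to one that lies inside `X` or misses `X`. -/
def CompletelyRamsey (X : Set RigidSurj) : Prop :=
  ∀ n g, ∃ h ∈ cyl n g, cyl n h ⊆ X ∨ Disjoint (cyl n h) X

/-- Every basic neighbourhood shrinks to one that misses `X`. -/
def RamseyNull (X : Set RigidSurj) : Prop :=
  ∀ n g, ∃ h ∈ cyl n g, Disjoint (cyl n h) X

/-- No shrinking of `cyl n g` lies inside `O`: the rejection of Nash-Williams' combinatorial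
forcing. -/
def Rejects (O : Set RigidSurj) (n : ℕ) (g : RigidSurj) : Prop :=
  ∀ h ∈ cyl n g, ¬ cyl n h ⊆ O

variable {O X Y : Set RigidSurj}

theorem Rejects.of_mem_cyl {n : ℕ} {g h : RigidSurj} (hg : Rejects O n g) (hh : h ∈ cyl n g) :
    Rejects O n h := fun f hf => hg f (cyl_subset hh hf)

theorem exists_forall_subset_or_rejects (O : Set RigidSurj) (n : ℕ) (g : RigidSurj) :
    ∃ h ∈ cyl n g, ∀ e m, n ≤ m → cyl m (e * h) ⊆ O ∨ Rejects O m (e * h) := by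
  refine exists_mem_cyl_forall_mul (D := fun m h => cyl m h ⊆ O ∨ Rejects O m h)
    (fun m h hD f hf => hD.imp (cyl_subset hf).trans (·.of_mem_cyl hf)) (fun m h => ?_) n g
  by_cases hrej : Rejects O m h
  · exact ⟨h, self_mem_cyl m h, .inr hrej⟩
  · simp only [Rejects, not_forall, not_not] at hrej
    obtain ⟨f, hf, hfO⟩ := hrej
    exact ⟨f, hf, .inl hfO⟩

theorem exists_subset_or_forall_rejects (O : Set RigidSurj) (n : ℕ) (g : RigidSurj) :
    ∃ h ∈ cyl n g, cyl n h ⊆ O ∨ ∀ f ∈ cyl n h, Rejects O (n + 1) f := by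
  obtain ⟨h, hh, hdec⟩ := exists_forall_subset_or_rejects O n g
  obtain ⟨f, hf, b, hb⟩ := exists_forall_mul_eq (j := n) (Q := fun e => cyl (n + 1) (e * h) ⊆ O)
    fun e e' he' => by
      have hmem := mul_mem_cyl_mul he' h
      refine propext ⟨fun hO => ?_, (cyl_subset hmem).trans⟩
      exact (hdec e (n + 1) n.le_succ).resolve_right fun hrej => hrej _ hmem hO
  refine ⟨f * h, cyl_subset hh ⟨f, hf, rfl⟩, ?_⟩
  by_cases hbt : b
  · left
    rintro _ ⟨e, he, rfl⟩
    exact (hb e he).mpr hbt (self_mem_cyl _ _)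
  · right
    rintro _ ⟨e, he, rfl⟩
    exact (hdec (e * f) (n + 1) n.le_succ).resolve_left fun hO => hbt ((hb e he).mp hO)

theorem completelyRamsey_of_isOpen (hO : IsOpen O) : CompletelyRamsey O := by
  intro n g
  obtain ⟨h, hh, hdec⟩ := exists_mem_cyl_forall_mul
    (D := fun m h => cyl m h ⊆ O ∨ ∀ f ∈ cyl m h, Rejects O (m + 1) f)
    (fun m h hD f hf => hD.imp (cyl_subset hf).trans fun hrej f' hf' =>
      hrej f' (cyl_subset hf hf')) (exists_subset_or_forall_rejects O) n g
  refine ⟨h, hh, or_iff_not_imp_left.2 fun hhO => disjoint_left.2 fun f hf hfO => ?_⟩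
  have hrej (m : ℕ) (hm : n ≤ m) : Rejects O (m + 1) f := by
    induction m, hm using Nat.le_induction with
    | base => exact (hdec 1 n le_rfl).resolve_left hhO f hf
    | succ m hm ih =>
      obtain ⟨e, -, rfl⟩ := hf
      exact (hdec e (m + 1) (hm.trans m.le_succ)).resolve_left (ih _ (self_mem_cyl _ _)) _
        (self_mem_cyl _ _)
  obtain ⟨m, hm⟩ := isOpen_iff_exists_cyl_subset.1 hO f hfO
  exact hrej (max n m) (le_max_left n m) f (self_mem_cyl _ _)
    ((cyl_antitone f ((le_max_right n m).trans (Nat.le_succ _))).trans hm)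

theorem RamseyNull.mono (hY : RamseyNull Y) (hXY : X ⊆ Y) : RamseyNull X := fun n g =>
  (hY n g).imp fun _ h => h.imp_right (·.mono_right hXY)

theorem RamseyNull.completelyRamsey (hX : RamseyNull X) : CompletelyRamsey X := fun n g =>
  (hX n g).imp fun _ h => h.imp_right .inr

theorem RamseyNull.union (hX : RamseyNull X) (hY : RamseyNull Y) : RamseyNull (X ∪ Y) := by
  intro n g
  obtain ⟨h, hh, hhX⟩ := hX n g
  obtain ⟨f, hf, hfY⟩ := hY n h
  exact ⟨f, cyl_subset hh hf, disjoint_union_right.2 ⟨hhX.mono_left (cyl_subset hf), hfY⟩⟩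

theorem RamseyNull.iUnion {X : ℕ → Set RigidSurj} (hX : ∀ i, RamseyNull (X i)) :
    RamseyNull (⋃ i, X i) := by
  have hfin (n : ℕ) : RamseyNull (accumulate X n) := by
    induction n with
    | zero => simpa using hX 0
    | succ n ih => simpa [accumulate_succ] using ih.union (hX (n + 1))
  intro n g
  obtain ⟨h, hh, hdisj⟩ := exists_mem_cyl_forall_mul
    (D := fun m h => Disjoint (cyl m h) (accumulate X m))
    (fun m h hD f hf => hD.mono_left (cyl_subset hf)) (fun m => hfin m m) n g
  refine ⟨h, hh, disjoint_iUnion_right.2 fun i => disjoint_left.2 ?_⟩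
  rintro _ ⟨e, -, rfl⟩ hi
  exact disjoint_left.1 (hdisj e (max n i) (le_max_left n i)) (self_mem_cyl _ _)
    (mem_accumulate.2 ⟨i, le_max_right n i, hi⟩)

theorem CompletelyRamsey.compl (hX : CompletelyRamsey X) : CompletelyRamsey Xᶜ := fun n g =>
  (hX n g).imp fun _ h => h.imp_right fun hor =>
    hor.symm.imp Disjoint.subset_compl_right disjoint_compl_right_iff_subset.2

theorem CompletelyRamsey.union_ramseyNull (hX : CompletelyRamsey X) (hY : RamseyNull Y) :
    CompletelyRamsey (X ∪ Y) := by
  intro n g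
  obtain ⟨h, hh, hhY⟩ := hY n g
  obtain ⟨f, hf, hfX⟩ := hX n h
  exact ⟨f, cyl_subset hh hf, hfX.imp (·.trans subset_union_left) fun hd =>
    disjoint_union_right.2 ⟨hd, hhY.mono_left (cyl_subset hf)⟩⟩

theorem CompletelyRamsey.ramseyNull_sdiff_interior (hX : CompletelyRamsey X) :
    RamseyNull (X \ interior X) := fun n g =>
  (hX n g).imp fun h => And.imp_right fun hor => hor.elim
    (fun hsub => disjoint_sdiff_right.mono_left (interior_maximal hsub (isOpen_cyl n h)))
    (·.mono_right sdiff_subset)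

theorem CompletelyRamsey.iUnion {X : ℕ → Set RigidSurj} (hX : ∀ i, CompletelyRamsey (X i)) :
    CompletelyRamsey (⋃ i, X i) := by
  have hunion : ⋃ i, X i = (⋃ i, interior (X i)) ∪ ⋃ i, X i \ interior (X i) := by
    rw [← iUnion_union_distrib]
    exact iUnion_congr fun i => (union_sdiff_cancel interior_subset).symm
  rw [hunion]
  exact (completelyRamsey_of_isOpen (isOpen_iUnion fun i => isOpen_interior)).union_ramseyNull
    (.iUnion fun i => (hX i).ramseyNull_sdiff_interior)

/-- The σ-algebra of completely Ramsey sets. -/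
instance : MeasurableSpace RigidSurj where
  MeasurableSet' := CompletelyRamsey
  measurableSet_empty n g := ⟨g, self_mem_cyl n g, .inr (disjoint_empty _)⟩
  measurableSet_compl _ := CompletelyRamsey.compl
  measurableSet_iUnion _ := CompletelyRamsey.iUnion

theorem measurableSet_iff_completelyRamsey : MeasurableSet X ↔ CompletelyRamsey X := Iff.rfl

instance : OpensMeasurableSpace RigidSurj :=
  ⟨MeasurableSpace.generateFrom_le fun _ => completelyRamsey_of_isOpen⟩

theorem CompletelyRamsey.ramseyNull_closure_sdiff (hY : CompletelyRamsey Y) (hXY : X ⊆ Y) :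
    RamseyNull (closure X \ Y) := fun n g =>
  (hY n g).imp fun h => And.imp_right fun hor => hor.elim disjoint_sdiff_right.mono_left
    fun hd => ((hd.mono_right hXY).closure_right (isOpen_cyl n h)).mono_right sdiff_subset

protected theorem measurableSet_souslinOp {A : List ℕ → Set RigidSurj}
    (hA : ∀ s, MeasurableSet (A s)) : MeasurableSet (souslinOp A) := by
  refine DualRamsey.measurableSet_souslinOp (fun B =>
    ⟨closure B, measurableSet_closure, subset_closure, fun C hC hBC D hD => ?_⟩) hA
  rw [measurableSet_iff_completelyRamsey] at hC ⊢
  exact ((hC.ramseyNull_closure_sdiff hBC).mono hD).completelyRamsey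

end RigidSurj

/-! ### Kernels of rigid surjections -/

theorem basicSet_subset_basicSet {S : Set (Setoid ℕ)} {a : Set (ℕ × ℕ)} {A B : ↥S}
    (hA : A ∈ basicSet S a B) : basicSet S a A ⊆ basicSet S a B := fun _ hF =>
  ⟨fun x y hxy => hF.1 x y (hA.1 x y hxy), hF.2⟩

namespace RigidSurj

theorem minReps_ker (g : RigidSurj) : minReps (Setoid.ker g) = range g.firstOcc := by
  ext n
  constructor
  · intro hn
    have hle : n ≤ g.firstOcc (g n) := hn _ (Setoid.ker_def.2 (g.apply_firstOcc (g n)).symm)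
    exact ⟨g n, (firstOcc_le le_rfl).antisymm hle⟩
  · rintro ⟨k, rfl⟩ m hm
    exact firstOcc_le ((g.apply_firstOcc k).symm.trans hm).le

theorem infinite_classes_ker (g : RigidSurj) : (classes (Setoid.ker g)).Infinite := by
  refine infinite_of_injective_forall_mem (f := fun k => {y | (Setoid.ker g).r (g.firstOcc k) y})
    (fun k l hkl => ?_) fun k => ⟨_, rfl⟩
  have h : g.firstOcc l ∈ {y | (Setoid.ker g).r (g.firstOcc k) y} := by
    dsimp only at hkl
    rw [hkl]
    rfl
  simpa [Setoid.ker] using h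

/-- The kernel of a rigid surjection, as a point of `𝓔_∞`. -/
def ker (g : RigidSurj) : ↥Einf := ⟨Setoid.ker g, g.infinite_classes_ker⟩

theorem coarsens_ker_iff {f g : RigidSurj} :
    Coarsens g.ker.1 f.ker.1 ↔ Function.FactorsThrough g f := Iff.rfl

theorem pRep_ker (g : RigidSurj) : pRep g.ker.1 = g.firstOcc := by
  have hinf : (minReps g.ker.1).Infinite := by
    change (minReps (Setoid.ker g)).Infinite
    rw [minReps_ker]
    exact infinite_range_of_injective g.firstOcc_strictMono.injective
  refine (StrictMono.range_inj (Nat.nth_strictMono hinf) g.firstOcc_strictMono).1 ?_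
  exact (Nat.range_nth_of_infinite hinf).trans g.minReps_ker

theorem approx_ker_eq_iff {f g : RigidSurj} {m n : ℕ} :
    approx m f.ker.1 = approx n g.ker.1 ↔ f.firstOcc m = g.firstOcc n ∧
      ∀ x < g.firstOcc n, ∀ y < g.firstOcc n, f x = f y ↔ g x = g y := by
  have hmem (f : RigidSurj) (m : ℕ) (x y : ℕ) : (x, y) ∈ approx m f.ker.1 ↔
      x < f.firstOcc m ∧ y < f.firstOcc m ∧ f x = f y := by
    rw [← pRep_ker]
    rfl
  simp only [Set.ext_iff, Prod.forall, hmem]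
  refine ⟨fun h => ?_, fun ⟨hmn, h⟩ x y => ?_⟩
  · have hmn : f.firstOcc m = g.firstOcc n := eq_of_forall_lt_iff fun x => by simpa using h x x
    exact ⟨hmn, fun x hx y hy => by simpa [hmn, hx, hy] using h x y⟩
  · rw [hmn]
    exact and_congr_right fun hx => and_congr_right fun hy => h x hx y hy

theorem approx_ker_eq_of_mem_cyl {n : ℕ} {f g : RigidSurj} (hf : f ∈ cyl n g) :
    approx n f.ker.1 = approx n g.ker.1 := by
  have hfg {x : ℕ} (hx : x < g.firstOcc n) : f x = g x :=
    (mem_cyl_iff.1 hf).2 x (apply_lt_of_lt_firstOcc hx).le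
  refine approx_ker_eq_iff.2 ⟨firstOcc_eq ?_ fun x hx => ?_, fun x hx y hy => ?_⟩
  · rw [(mem_cyl_iff.1 hf).2 _ (g.apply_firstOcc n).le, apply_firstOcc]
  · rw [hfg hx]
    exact apply_lt_of_lt_firstOcc hx
  · rw [hfg hx, hfg hy]

theorem apply_eq_of_injOn {e : RigidSurj} {n : ℕ} (he : InjOn e (Iio n)) {x : ℕ} (hx : x < n) :
    e x = x := by
  induction x using Nat.strong_induction_on with
  | _ x ih =>
    refine (e.apply_le x).eq_or_lt.resolve_right fun hlt => ?_
    exact hlt.ne (he (hlt.trans hx) hx (ih _ hlt (hlt.trans hx)))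

theorem mem_fixing_of_approx_ker_eq {e g : RigidSurj} {m n : ℕ}
    (h : approx m (e * g).ker.1 = approx n g.ker.1) : e ∈ fixing n := by
  obtain ⟨hocc, hker⟩ := approx_ker_eq_iff.1 h
  have hfix {x : ℕ} (hx : x < n) : e x = x := by
    refine apply_eq_of_injOn (fun x hx y hy hxy => ?_) hx
    have hxy' := hker _ (g.firstOcc_strictMono hx) _ (g.firstOcc_strictMono hy)
    simp only [mul_apply, apply_firstOcc] at hxy'
    exact hxy'.1 hxy
  have hen : e n = m := by
    rw [← (e * g).apply_firstOcc m, hocc, mul_apply, apply_firstOcc]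
  have hfix_n : e n = n := by
    refine (e.apply_le n).eq_or_lt.resolve_right fun hlt => ?_
    rw [hen] at hlt
    have hm : (e * g).firstOcc m ≤ g.firstOcc m := firstOcc_le (by simp [hfix hlt])
    exact (hocc ▸ hm).not_gt (g.firstOcc_strictMono hlt)
  exact fun x hx => hx.eq_or_lt.elim (fun h => h ▸ hfix_n) hfix

theorem ker_mem_basicSet_iff {n : ℕ} {f g : RigidSurj} :
    f.ker ∈ basicSet Einf (approx n g.ker.1) g.ker ↔ f ∈ cyl n g := by
  constructor
  · rintro ⟨hfg, m, hm⟩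
    obtain ⟨e, rfl⟩ := exists_mul_eq_of_factorsThrough (coarsens_ker_iff.1 hfg)
    exact ⟨e, mem_fixing_of_approx_ker_eq hm, rfl⟩
  · intro hf
    exact ⟨coarsens_ker_iff.2 (mem_cyl_iff.1 hf).1, n, approx_ker_eq_of_mem_cyl hf⟩

end RigidSurj

/-- The least element of the class of `x`. -/
noncomputable def minRep (E : Setoid ℕ) (x : ℕ) : ℕ := sInf {y | E.r x y}

theorem rel_minRep (E : Setoid ℕ) (x : ℕ) : E.r x (minRep E x) :=
  Nat.sInf_mem (s := {y | E.r x y}) ⟨x, E.refl x⟩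

theorem minRep_le {E : Setoid ℕ} {x y : ℕ} (h : E.r x y) : minRep E x ≤ y := Nat.sInf_le h

theorem minRep_mem_minReps (E : Setoid ℕ) (x : ℕ) : minRep E x ∈ minReps E := fun _ hy =>
  minRep_le (E.trans (rel_minRep E x) hy)

theorem minRep_eq_self {E : Setoid ℕ} {x : ℕ} (hx : x ∈ minReps E) : minRep E x = x :=
  (minRep_le (E.refl x)).antisymm (hx _ (rel_minRep E x))

theorem minRep_eq_iff {E : Setoid ℕ} {x y : ℕ} : minRep E x = minRep E y ↔ E.r x y := by
  refine ⟨fun h => E.trans (rel_minRep E x) (h ▸ E.symm (rel_minRep E y)), fun h => ?_⟩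
  exact (minRep_le (E.trans h (rel_minRep E y))).antisymm
    (minRep_le (E.trans (E.symm h) (rel_minRep E x)))

theorem infinite_minReps (E : ↥Einf) : (minReps E.1).Infinite := by
  refine Infinite.of_image (fun x => {y | E.1.r x y}) (E.2.mono ?_)
  rintro _ ⟨x, rfl⟩
  refine ⟨minRep E.1 x, minRep_mem_minReps _ x, ?_⟩
  ext y
  exact ⟨E.1.trans (rel_minRep E.1 x), E.1.trans (E.1.symm (rel_minRep E.1 x))⟩

namespace RigidSurj

theorem ker_surjective : Function.Surjective ker := by
  classical
  intro E
  let f (x : ℕ) : ℕ := Nat.count (· ∈ minReps E.1) (minRep E.1 x)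
  have hf_pRep (k : ℕ) : f (pRep E.1 k) = k := by
    have hmem : pRep E.1 k ∈ minReps E.1 := Nat.nth_mem_of_infinite (infinite_minReps E) k
    rw [show f (pRep E.1 k) = _ from congrArg (Nat.count _) (minRep_eq_self hmem)]
    exact Nat.count_nth_of_infinite (p := (· ∈ minReps E.1)) (infinite_minReps E) k
  refine ⟨⟨f, fun x k hk => ⟨pRep E.1 k, ?_, hf_pRep k⟩, fun k => ⟨_, hf_pRep k⟩⟩,
    Subtype.ext (Setoid.ext fun x y => ?_)⟩
  · exact (Nat.nth_lt_of_lt_count hk).trans_le (minRep_le (E.1.refl x))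
  · refine Iff.trans ⟨fun h => ?_, fun h => congrArg (Nat.count _) h⟩ minRep_eq_iff
    exact Nat.count_injective (minRep_mem_minReps _ x) (minRep_mem_minReps _ y) h

theorem continuous_ker : @Continuous _ _ _ (ellentuckTop Einf) ker := by
  refine continuous_generateFrom_iff.2 ?_
  rintro _ ⟨a, E, rfl⟩ g ⟨hgE, n, rfl⟩
  exact ⟨n, fun h hh => basicSet_subset_basicSet ⟨hgE, n, rfl⟩ (ker_mem_basicSet_iff.2 hh)⟩

theorem isRamsey_of_completelyRamsey {X : Set ↥Einf} (hX : CompletelyRamsey (ker ⁻¹' X)) :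
    IsRamsey Einf X := by
  rintro a B ⟨F, hFB, n, rfl⟩
  obtain ⟨f, rfl⟩ := ker_surjective F
  obtain ⟨h, hh, hX⟩ := hX n f
  have hpre : ker ⁻¹' basicSet Einf (approx n f.ker.1) h.ker = cyl n h := by
    ext g
    rw [← approx_ker_eq_of_mem_cyl hh]
    exact ker_mem_basicSet_iff
  refine ⟨h.ker, basicSet_subset_basicSet ⟨hFB, n, rfl⟩ (ker_mem_basicSet_iff.2 hh), ?_⟩
  rw [← disjoint_iff_inter_eq_empty, ← ker_surjective.preimage_subset_preimage_iff,
    ← disjoint_preimage_iff ker_surjective, hpre]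
  exact hX

end RigidSurj

theorem SouslinMeasurable.isRamsey {X : Set ↥Einf}
    (hX : SouslinMeasurable (ellentuckTop Einf) X) : IsRamsey Einf X := by
  let _ := ellentuckTop Einf
  refine RigidSurj.isRamsey_of_completelyRamsey (RigidSurj.measurableSet_iff_completelyRamsey.1 ?_)
  exact hX.measurableSet_preimage
    (fun _ hU => (IsOpen.preimage RigidSurj.continuous_ker hU).measurableSet)
    fun _ => RigidSurj.measurableSet_souslinOp

/-! ### Finite colourings -/

theorem exists_mem_basicSet_forall_isRamsey {S : Set (Setoid ℕ)} {ι : Type*} [Finite ι]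
    {X : ι → Set ↥S} (hX : ∀ i, IsRamsey S (X i)) {a : Set (ℕ × ℕ)} {B : ↥S}
    (hB : (basicSet S a B).Nonempty) :
    ∃ A ∈ basicSet S a B, ∀ i, basicSet S a A ⊆ X i ∨ basicSet S a A ∩ X i = ∅ := by
  have hfin (T : Set ι) (hT : T.Finite) :
      ∃ A ∈ basicSet S a B, ∀ i ∈ T, basicSet S a A ⊆ X i ∨ basicSet S a A ∩ X i = ∅ := by
    induction T, hT using Set.Finite.induction_on with
    | empty => exact hB.imp fun F hF => ⟨hF, by simp⟩
    | @insert i T _ _ ih =>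
      obtain ⟨A, hA, hAT⟩ := ih
      obtain ⟨A', hA', hAi⟩ := hX i a A ⟨A, fun _ _ => id, hA.2⟩
      refine ⟨A', basicSet_subset_basicSet hA hA', forall_mem_insert.2 ⟨hAi, fun j hj => ?_⟩⟩
      have hsub := basicSet_subset_basicSet hA'
      exact (hAT j hj).imp hsub.trans fun h =>
        subset_empty_iff.1 ((inter_subset_inter_left _ hsub).trans h.subset)
  obtain ⟨A, hA, h⟩ := hfin univ finite_univ
  exact ⟨A, hA, fun i => h i (mem_univ i)⟩

theorem mem_basicSet_empty {S : Set (Setoid ℕ)} {E F : ↥S} :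
    F ∈ basicSet S ∅ E ↔ Coarsens F.1 E.1 := by
  have hzero : pRep F.1 0 = 0 := Nat.nth_zero_of_zero fun m _ => m.zero_le
  exact and_iff_left ⟨0, by simp [approx, hzero]⟩

theorem dualSilver_general {κ : Type*} [Finite κ] (c : ↥Einf → κ)
    (hc : ∀ i, SouslinMeasurable (ellentuckTop Einf) {E | c E = i}) {a : Set (ℕ × ℕ)} {B : ↥Einf}
    (hB : (basicSet Einf a B).Nonempty) :
    ∃ A ∈ basicSet Einf a B, ∀ Y ∈ basicSet Einf a A, ∀ Z ∈ basicSet Einf a A, c Y = c Z := by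
  obtain ⟨A, hA, hAc⟩ := exists_mem_basicSet_forall_isRamsey (fun i => (hc i).isRamsey) hB
  refine ⟨A, hA, fun Y hY Z hZ => ?_⟩
  have hsub : basicSet Einf a A ⊆ {E | c E = c Z} :=
    (hAc (c Z)).resolve_right (Nonempty.ne_empty ⟨Z, hZ, rfl⟩)
  exact hsub hY

/-- **Dual Silver theorem** (Carlson–Simpson; Souslin measurable form).
For every finite Souslin measurable colouring `c` of `𝓔_∞` (with respect to the
Ellentuck topology), there is `X ∈ 𝓔_∞` such that `c` is constant on `𝓔_∞ ↾ X`. -/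
theorem dualSilver (m : ℕ) (c : ↥Einf → Fin m)
    (hc : ∀ i : Fin m, SouslinMeasurable (ellentuckTop Einf) {E | c E = i}) :
    ∃ X : ↥Einf, ∀ Y Z : ↥Einf,
      Coarsens Y.1 X.1 → Coarsens Z.1 X.1 → c Y = c Z := by
  obtain ⟨X, -, hX⟩ := dualSilver_general c hc (B := RigidSurj.ker 1)
    ⟨_, mem_basicSet_empty.2 fun _ _ => id⟩
  exact ⟨X, fun Y Z hY hZ => hX Y (mem_basicSet_empty.2 hY) Z (mem_basicSet_empty.2 hZ)⟩

end DualRamsey
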